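/- Let γ : ℝ → ℝ² be a smooth regular plane curve parametrised by arc length with curvature κ, which is proper (the preimage of every compact subset of ℝ² is compact), and let V ∈ ℝ² satisfy −κ''(s) = ⟨V, ν(s)⟩ for all s. Suppose lim_{ρ→∞} ( ρ^{-2} ∫_{γ^{-1}(B_ρ(0))} κ(s)² ds + ρ^{-1} ∫_{γ^{-1}(B_{2ρ}(0))} |⟨V, γ'(s)⟩| ds ) = 0, where B_ρ(0) is the closed ball of radius ρ centred at the origin in ℝ². Then γ is a straight line: γ(s) = γ(0) + s γ'(0) for all s. -/

import Mathlib

open Real MeasureTheory Filter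

/-- Euclidean inner product on `ℝ × ℝ`. -/
def innerP (a b : ℝ × ℝ) : ℝ := a.1 * b.1 + a.2 * b.2

/-- Unit normal `ν = (y', -x')` of a plane curve parametrised by arc length. -/
noncomputable def nuA (γ : ℝ → ℝ × ℝ) (s : ℝ) : ℝ × ℝ :=
  ((deriv γ s).2, -(deriv γ s).1)

/-- Curvature `κ = ⟨γ'', ν⟩` of a plane curve parametrised by arc length. -/
noncomputable def curvA (γ : ℝ → ℝ × ℝ) (s : ℝ) : ℝ :=
  innerP (deriv (deriv γ) s) (nuA γ s)

/-- The closed Euclidean ball of radius `ρ` centred at the origin in `ℝ × ℝ`. -/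
def euclBall (ρ : ℝ) : Set (ℝ × ℝ) := {p : ℝ × ℝ | Real.sqrt (p.1 ^ 2 + p.2 ^ 2) ≤ ρ}

/-!
Along a translator the flux `⟨V, γ'⟩ + κ κ'` has derivative `κ' ^ 2`. Testing this identity with the
cutoff `(1 - |γ|² / R²)₊²`, whose derivative is at most `4 / R` times its own square root, and
absorbing `κ κ'` by Young's inequality bounds the localised energy of `κ'` by the growth quotient at
radius `R`. The cutoffs increase with `R`, so each of these energies vanishes and `κ` is constant.
A curve of constant curvature `k ≠ 0` lies on a circle, which properness excludes; hence `κ = 0`.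
-/

section Plane

theorem innerP_self_nonneg (a : ℝ × ℝ) : 0 ≤ innerP a a :=
  add_nonneg (mul_self_nonneg _) (mul_self_nonneg _)

theorem innerP_sq_le (a b : ℝ × ℝ) : innerP a b ^ 2 ≤ innerP a a * innerP b b := by
  unfold innerP
  linarith [sq_nonneg (a.1 * b.2 - a.2 * b.1)]

theorem continuous_innerP_comp {X : Type*} [TopologicalSpace X] {f g : X → ℝ × ℝ}
    (hf : Continuous f) (hg : Continuous g) : Continuous fun x => innerP (f x) (g x) := by
  unfold innerP
  fun_prop

theorem mem_euclBall_iff {R : ℝ} (hR : 0 ≤ R) (p : ℝ × ℝ) :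
    p ∈ euclBall R ↔ innerP p p ≤ R ^ 2 := by
  simp only [euclBall, innerP, Set.mem_ofPred_eq, Real.sqrt_le_left hR, ← sq]

theorem euclBall_subset_euclBall {r R : ℝ} (h : r ≤ R) : euclBall r ⊆ euclBall R :=
  fun _ hp => le_trans hp h

theorem isCompact_euclBall (R : ℝ) : IsCompact (euclBall R) := by
  refine isCompact_Icc.of_isClosed_subset (s := Set.Icc ((-R, -R) : ℝ × ℝ) (R, R))
    (isClosed_le (by fun_prop) continuous_const) fun p hp => ?_
  have h1 : |p.1| ≤ R := (Real.abs_le_sqrt (le_add_of_nonneg_right (sq_nonneg p.2))).trans hp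
  have h2 : |p.2| ≤ R := (Real.abs_le_sqrt (le_add_of_nonneg_left (sq_nonneg p.1))).trans hp
  exact ⟨⟨(abs_le.1 h1).1, (abs_le.1 h2).1⟩, (abs_le.1 h1).2, (abs_le.1 h2).2⟩

theorem hasDerivAt_fst_comp {f : ℝ → ℝ × ℝ} {f' : ℝ × ℝ} {s : ℝ} (hf : HasDerivAt f f' s) :
    HasDerivAt (fun t => (f t).1) f'.1 s :=
  hf.hasFDerivAt.fst.hasDerivAt.congr_deriv (by simp)

theorem hasDerivAt_snd_comp {f : ℝ → ℝ × ℝ} {f' : ℝ × ℝ} {s : ℝ} (hf : HasDerivAt f f' s) :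
    HasDerivAt (fun t => (f t).2) f'.2 s :=
  hf.hasFDerivAt.snd.hasDerivAt.congr_deriv (by simp)

theorem hasDerivAt_innerP {f g : ℝ → ℝ × ℝ} {f' g' : ℝ × ℝ} {s : ℝ}
    (hf : HasDerivAt f f' s) (hg : HasDerivAt g g' s) :
    HasDerivAt (fun t => innerP (f t) (g t)) (innerP f' (g s) + innerP (f s) g') s := by
  refine (((hasDerivAt_fst_comp hf).mul (hasDerivAt_fst_comp hg)).add
    ((hasDerivAt_snd_comp hf).mul (hasDerivAt_snd_comp hg))).congr_deriv ?_
  simp only [innerP]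
  ring

end Plane

section ProperMap

theorem not_isBounded_range_of_isProperMap {X Y : Type*} [TopologicalSpace X] [NoncompactSpace X]
    [PseudoMetricSpace Y] [ProperSpace Y] {f : X → Y} (hf : IsProperMap f) :
    ¬ Bornology.IsBounded (Set.range f) := fun hbdd => by
  have hcompact := hf.isCompact_preimage hbdd.isCompact_closure
  rw [Set.preimage_eq_univ_iff.2 subset_closure] at hcompact
  exact noncompact_univ X hcompact

theorem setIntegral_preimage_euclBall_mono {γ : ℝ → ℝ × ℝ} (hγ : IsProperMap γ) {f : ℝ → ℝ}
    (hf : Continuous f) (hf0 : ∀ s, 0 ≤ f s) {r R : ℝ} (h : r ≤ R) :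
    ∫ s in γ ⁻¹' euclBall r, f s ≤ ∫ s in γ ⁻¹' euclBall R, f s :=
  setIntegral_mono_set
    (hf.continuousOn.integrableOn_compact (hγ.isCompact_preimage (isCompact_euclBall R)))
    (Eventually.of_forall hf0)
    (Set.preimage_mono (euclBall_subset_euclBall h)).eventuallyLE

theorem eventually_growth_lt_of_tendsto_doubled {γ : ℝ → ℝ × ℝ} (hγ : IsProperMap γ)
    {f g : ℝ → ℝ} (hg : Continuous g) (hg0 : ∀ s, 0 ≤ g s)
    (hlim : Tendsto (fun ρ : ℝ => (1 / ρ ^ 2) * (∫ s in γ ⁻¹' euclBall ρ, f s)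
      + (1 / ρ) * ∫ s in γ ⁻¹' euclBall (2 * ρ), g s) atTop (nhds 0)) {ε : ℝ} (hε : 0 < ε) :
    ∀ᶠ ρ : ℝ in atTop, (1 / ρ ^ 2) * (∫ s in γ ⁻¹' euclBall ρ, f s)
      + (1 / ρ) * (∫ s in γ ⁻¹' euclBall ρ, g s) < ε := by
  filter_upwards [hlim.eventually_lt_const hε, eventually_gt_atTop 0] with ρ hlt hρ
  have hmono := setIntegral_preimage_euclBall_mono hγ hg hg0 (by linarith : ρ ≤ 2 * ρ)
  exact hlt.trans_le' (by gcongr)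

end ProperMap

section Cutoff

theorem hasDerivAt_max_zero_sq (u : ℝ) :
    HasDerivAt (fun t : ℝ => max t 0 ^ 2) (2 * max u 0) u := by
  refine hasDerivAt_of_hasDerivAt_of_ne' (x := 0) (g := fun t => 2 * max t 0) (fun t ht => ?_)
    (by fun_prop) (by fun_prop) u
  rcases ht.lt_or_gt with hneg | hpos
  · rw [max_eq_right hneg.le, mul_zero]
    refine (hasDerivAt_const t (0 : ℝ)).congr_of_eventuallyEq ?_
    filter_upwards [eventually_lt_nhds hneg] with r hr
    rw [max_eq_right hr.le, zero_pow two_ne_zero]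
  · rw [max_eq_left hpos.le]
    refine (by simpa using hasDerivAt_pow 2 t : HasDerivAt (· ^ 2) (2 * t) t)
      |>.congr_of_eventuallyEq ?_
    filter_upwards [eventually_gt_nhds hpos] with r hr
    rw [max_eq_left hr.le]

/-- The cutoff `(1 - |p|² / R²)₊²`, supported in the closed ball of radius `R`. -/
noncomputable def ballCutoff (R : ℝ) (p : ℝ × ℝ) : ℝ :=
  max (1 - innerP p p / R ^ 2) 0 ^ 2

/-- The directional derivative of `ballCutoff R` at `p` in the direction `q`. -/
noncomputable def ballCutoffDeriv (R : ℝ) (p q : ℝ × ℝ) : ℝ :=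
  -(4 / R ^ 2) * max (1 - innerP p p / R ^ 2) 0 * innerP p q

theorem hasDerivAt_ballCutoff_comp (R : ℝ) {f : ℝ → ℝ × ℝ} {f' : ℝ × ℝ} {s : ℝ}
    (hf : HasDerivAt f f' s) :
    HasDerivAt (fun t => ballCutoff R (f t)) (ballCutoffDeriv R (f s) f') s := by
  refine ((hasDerivAt_max_zero_sq _).comp s
    (((hasDerivAt_innerP hf hf).div_const (R ^ 2)).const_sub 1)).congr_deriv ?_
  simp only [ballCutoffDeriv, innerP]
  ring

theorem continuous_ballCutoff (R : ℝ) : Continuous (ballCutoff R) := by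
  unfold ballCutoff innerP
  fun_prop

theorem continuous_ballCutoffDeriv (R : ℝ) :
    Continuous fun p : (ℝ × ℝ) × ℝ × ℝ => ballCutoffDeriv R p.1 p.2 := by
  unfold ballCutoffDeriv innerP
  fun_prop

theorem ballCutoff_nonneg (R : ℝ) (p : ℝ × ℝ) : 0 ≤ ballCutoff R p := sq_nonneg _

theorem ballCutoff_le_one (R : ℝ) (p : ℝ × ℝ) : ballCutoff R p ≤ 1 :=
  pow_le_one₀ (le_max_right _ _) <|
    max_le (sub_le_self _ (div_nonneg (innerP_self_nonneg p) (sq_nonneg R))) zero_le_one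

theorem ballCutoff_mono {r R : ℝ} (hr : 0 < r) (h : r ≤ R) (p : ℝ × ℝ) :
    ballCutoff r p ≤ ballCutoff R p := by
  have := innerP_self_nonneg p
  unfold ballCutoff
  gcongr

theorem ballCutoff_pos {R : ℝ} (hR : 0 < R) {p : ℝ × ℝ} (hp : innerP p p < R ^ 2) :
    0 < ballCutoff R p :=
  pow_pos (lt_max_of_lt_left (sub_pos.2 ((div_lt_one (pow_pos hR 2)).2 hp))) 2

theorem ballCutoff_base_eq_zero {R : ℝ} (hR : 0 < R) {p : ℝ × ℝ} (hp : p ∉ euclBall R) :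
    max (1 - innerP p p / R ^ 2) 0 = 0 := by
  rw [mem_euclBall_iff hR.le, not_le] at hp
  exact max_eq_right (sub_nonpos.2 ((one_le_div (pow_pos hR 2)).2 hp.le))

theorem ballCutoff_eq_zero {R : ℝ} (hR : 0 < R) {p : ℝ × ℝ} (hp : p ∉ euclBall R) :
    ballCutoff R p = 0 := by
  rw [ballCutoff, ballCutoff_base_eq_zero hR hp, zero_pow two_ne_zero]

theorem ballCutoffDeriv_sq_le {R : ℝ} (hR : 0 < R) (p q : ℝ × ℝ) :
    ballCutoffDeriv R p q ^ 2 ≤ (4 / R) ^ 2 * ballCutoff R p * innerP q q := by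
  by_cases hp : p ∈ euclBall R
  · rw [mem_euclBall_iff hR.le] at hp
    have hq := innerP_self_nonneg q
    have hpq : innerP p q ^ 2 ≤ R ^ 2 * innerP q q := (innerP_sq_le p q).trans (by gcongr)
    calc ballCutoffDeriv R p q ^ 2
        = (4 / R ^ 2) ^ 2 * ballCutoff R p * innerP p q ^ 2 := by
          unfold ballCutoffDeriv ballCutoff; ring
      _ ≤ (4 / R ^ 2) ^ 2 * ballCutoff R p * (R ^ 2 * innerP q q) := by
          have := ballCutoff_nonneg R p
          gcongr
      _ = (4 / R) ^ 2 * ballCutoff R p * innerP q q := by field_simp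
  · rw [ballCutoffDeriv, ballCutoff, ballCutoff_base_eq_zero hR hp]
    simp

end Cutoff

section EnergyEstimate

theorem cutoff_energy_le_pointwise {v k w φ φ' L : ℝ} (hL : 0 ≤ L) (hφ0 : 0 ≤ φ) (hφ1 : φ ≤ 1)
    (hφ' : φ' ^ 2 ≤ L ^ 2 * φ) :
    w ^ 2 * φ ≤ 2 * (w ^ 2 * φ + (v + k * w) * φ') + (L ^ 2 * k ^ 2 + 2 * L * |v|) := by
  have hφ'L : |φ'| ≤ L :=
    abs_le_of_sq_le_sq (hφ'.trans (mul_le_of_le_one_right (sq_nonneg L) hφ1)) hL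
  have hv : |v * φ'| ≤ L * |v| := by
    rw [abs_mul, mul_comm]
    gcongr
  have young : |2 * (k * w * φ')| ≤ w ^ 2 * φ + L ^ 2 * k ^ 2 := by
    refine abs_le_of_sq_le_sq ?_ (by positivity)
    calc (2 * (k * w * φ')) ^ 2 = 4 * (k * w) ^ 2 * φ' ^ 2 := by ring
      _ ≤ 4 * (k * w) ^ 2 * (L ^ 2 * φ) := by gcongr
      _ = 4 * (w ^ 2 * φ) * (L ^ 2 * k ^ 2) := by ring
      _ ≤ (w ^ 2 * φ + L ^ 2 * k ^ 2) ^ 2 := four_mul_le_sq_add _ _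
  linarith [neg_abs_le (v * φ'), neg_abs_le (2 * (k * w * φ'))]

theorem integral_sq_mul_cutoff_le {v k w φ φ' : ℝ → ℝ} {K : Set ℝ} {L : ℝ}
    (hv : Continuous v) (hk : Continuous k) (hw : Continuous w)
    (hflux : ∀ s, HasDerivAt (fun t => v t + k t * w t) (w s ^ 2) s)
    (hφ : ∀ s, HasDerivAt φ (φ' s) s) (hφ'c : Continuous φ')
    (hφ0 : ∀ s, 0 ≤ φ s) (hφ1 : ∀ s, φ s ≤ 1) (hK : IsCompact K) (hφK : ∀ s ∉ K, φ s = 0)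
    (hL : 0 ≤ L) (hφ' : ∀ s, φ' s ^ 2 ≤ L ^ 2 * φ s) :
    ∫ s, w s ^ 2 * φ s ≤ L ^ 2 * (∫ s in K, k s ^ 2) + 2 * L * ∫ s in K, |v s| := by
  have hφc : Continuous φ := continuous_iff_continuousAt.2 fun s => (hφ s).continuousAt
  have hφ'K : ∀ s ∉ K, φ' s = 0 := fun s hs => by
    have h := hφ' s
    rw [hφK s hs, mul_zero] at h
    exact pow_eq_zero_iff two_ne_zero |>.1 (h.antisymm (sq_nonneg _))
  have hint : ∀ {f : ℝ → ℝ}, Continuous f → (∀ s ∉ K, f s = 0) → Integrable f := fun hf hfK =>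
    hf.integrable_of_hasCompactSupport (.intro hK fun s hs => hfK s hs)
  set Φ' : ℝ → ℝ := fun s => w s ^ 2 * φ s + (v s + k s * w s) * φ' s
  have hΦ'int : Integrable Φ' := hint (by fun_prop) fun s hs => by simp [Φ', hφK s hs, hφ'K s hs]
  have hΦ' : ∫ s, Φ' s = 0 := integral_eq_zero_of_hasDerivAt_of_integrable
    (fun s => (hflux s).mul (hφ s)) hΦ'int
    (hint (by fun_prop) fun s hs => by simp [hφK s hs])
  set g : ℝ → ℝ := fun s => L ^ 2 * k s ^ 2 + 2 * L * |v s|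
  have hon : ∀ {f : ℝ → ℝ}, Continuous f → IntegrableOn f K := fun hf =>
    hf.continuousOn.integrableOn_compact hK
  have hgint : Integrable (K.indicator g) :=
    (hon (by fun_prop)).integrable_indicator hK.measurableSet
  calc ∫ s, w s ^ 2 * φ s
      ≤ ∫ s, (2 * Φ' s + K.indicator g s) := by
        refine integral_mono (hint (by fun_prop) fun s hs => by simp [hφK s hs])
          ((hΦ'int.const_mul 2).add hgint) fun s => ?_
        by_cases hs : s ∈ K
        · simpa only [Set.indicator_of_mem hs] using
            cutoff_energy_le_pointwise hL (hφ0 s) (hφ1 s) (hφ' s)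
        · simp [Φ', hs, hφK s hs, hφ'K s hs]
    _ = ∫ s in K, g s := by
        rw [integral_add (hΦ'int.const_mul 2) hgint, integral_const_mul, hΦ', mul_zero, zero_add,
          integral_indicator hK.measurableSet]
    _ = L ^ 2 * (∫ s in K, k s ^ 2) + 2 * L * ∫ s in K, |v s| := by
        rw [integral_add (hon (by fun_prop)) (hon (by fun_prop)), integral_const_mul,
          integral_const_mul]

end EnergyEstimate

section UnitSpeed

variable {γ : ℝ → ℝ × ℝ}

theorem contDiff_curvA {n : ℕ} (hγ : ContDiff ℝ (n + 2 : ℕ) γ) : ContDiff ℝ n (curvA γ) := by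
  have hγ' : ContDiff ℝ n (deriv γ) :=
    ContDiff.iterate_deriv' n 1 (hγ.of_le (by exact_mod_cast Nat.le_succ _))
  have hγ'' : ContDiff ℝ n (deriv (deriv γ)) := ContDiff.iterate_deriv' n 2 hγ
  exact (hγ''.fst.mul hγ'.snd).add (hγ''.snd.mul hγ'.fst.neg)

theorem hasDerivAt_of_unitSpeed {s : ℝ} (hunit : (deriv γ s).1 ^ 2 + (deriv γ s).2 ^ 2 = 1) :
    HasDerivAt γ (deriv γ s) s := by
  refine (differentiableAt_of_deriv_ne_zero fun h0 => ?_).hasDerivAt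
  simp [h0] at hunit

theorem hasDerivAt_tangent {s : ℝ} (hγ' : DifferentiableAt ℝ (deriv γ) s)
    (hunit : ∀ s, (deriv γ s).1 ^ 2 + (deriv γ s).2 ^ 2 = 1) :
    HasDerivAt (deriv γ) (curvA γ s • nuA γ s) s := by
  have hT := hγ'.hasDerivAt
  have horth : innerP (deriv (deriv γ) s) (deriv γ s) +
      innerP (deriv γ s) (deriv (deriv γ) s) = 0 := by
    refine (hasDerivAt_innerP hT hT).unique ?_
    simpa only [innerP, ← sq, hunit] using hasDerivAt_const s (1 : ℝ)
  refine hT.congr_deriv (Prod.ext ?_ ?_) <;>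
    simp only [curvA, nuA, innerP, Prod.smul_fst, Prod.smul_snd, smul_eq_mul] at horth ⊢
  · linear_combination (-(deriv (deriv γ) s).1) * hunit s + (deriv γ s).1 / 2 * horth
  · linear_combination (-(deriv (deriv γ) s).2) * hunit s + (deriv γ s).2 / 2 * horth

theorem hasDerivAt_normal {s : ℝ} (hγ' : DifferentiableAt ℝ (deriv γ) s)
    (hunit : ∀ s, (deriv γ s).1 ^ 2 + (deriv γ s).2 ^ 2 = 1) :
    HasDerivAt (nuA γ) (-(curvA γ s) • deriv γ s) s := by
  have hT := hasDerivAt_tangent hγ' hunit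
  refine ((hasDerivAt_snd_comp hT).prodMk (hasDerivAt_fst_comp hT).neg).congr_deriv ?_
  ext <;> simp [nuA]

theorem norm_nuA_le_one {s : ℝ} (hunit : (deriv γ s).1 ^ 2 + (deriv γ s).2 ^ 2 = 1) :
    ‖nuA γ s‖ ≤ 1 := by
  refine max_le ?_ ?_ <;> rw [Real.norm_eq_abs, ← sq_le_one_iff_abs_le_one] <;>
    simp only [nuA, neg_sq] <;> linarith [sq_nonneg (deriv γ s).1, sq_nonneg (deriv γ s).2]

theorem isBounded_range_of_curvA_eq_const (hγ' : Differentiable ℝ (deriv γ))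
    (hunit : ∀ s, (deriv γ s).1 ^ 2 + (deriv γ s).2 ^ 2 = 1) {k : ℝ} (hk : ∀ s, curvA γ s = k)
    (hk0 : k ≠ 0) : Bornology.IsBounded (Set.range γ) := by
  have hcenter' : ∀ s, HasDerivAt (fun t => γ t + k⁻¹ • nuA γ t) 0 s := fun s => by
    refine ((hasDerivAt_of_unitSpeed (hunit s)).add
      ((hasDerivAt_normal (hγ' s) hunit).const_smul k⁻¹)).congr_deriv ?_
    rw [hk, smul_smul, mul_neg, inv_mul_cancel₀ hk0, neg_one_smul, add_neg_cancel]
  have hcenter : ∀ s, γ s + k⁻¹ • nuA γ s = γ 0 + k⁻¹ • nuA γ 0 := fun s =>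
    is_const_of_deriv_eq_zero (fun t => (hcenter' t).differentiableAt)
      (fun t => (hcenter' t).deriv) s 0
  refine Metric.isBounded_closedBall (x := γ 0 + k⁻¹ • nuA γ 0) (r := ‖k⁻¹‖) |>.subset ?_
  rintro _ ⟨s, rfl⟩
  rw [← hcenter s, mem_closedBall_iff_norm, sub_add_cancel_left, norm_neg, norm_smul]
  exact mul_le_of_le_one_right (norm_nonneg _) (norm_nuA_le_one (hunit s))

theorem eq_line_of_curvA_eq_zero (hγ' : Differentiable ℝ (deriv γ))
    (hunit : ∀ s, (deriv γ s).1 ^ 2 + (deriv γ s).2 ^ 2 = 1)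
    (hk : ∀ s, curvA γ s = 0) (s : ℝ) : γ s = γ 0 + s • deriv γ 0 := by
  have htangent : ∀ t, deriv γ t = deriv γ 0 := fun t =>
    is_const_of_deriv_eq_zero hγ'
      (fun r => by rw [(hasDerivAt_tangent (hγ' r) hunit).deriv, hk, zero_smul]) t 0
  have hdiff : ∀ t, HasDerivAt (fun r => γ r - r • deriv γ 0) 0 t := fun t => by
    refine ((hasDerivAt_of_unitSpeed (hunit t)).sub
      ((hasDerivAt_id t).smul_const (deriv γ 0))).congr_deriv ?_
    rw [htangent t, one_smul, sub_self]
  have hconst := is_const_of_deriv_eq_zero (fun t => (hdiff t).differentiableAt)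
    (fun t => (hdiff t).deriv) s 0
  rwa [zero_smul, sub_zero, sub_eq_iff_eq_add] at hconst

end UnitSpeed

section Translator

variable {γ : ℝ → ℝ × ℝ} {V : ℝ × ℝ}

theorem hasDerivAt_translator_flux {s : ℝ} (hγ' : DifferentiableAt ℝ (deriv γ) s)
    (hunit : ∀ s, (deriv γ s).1 ^ 2 + (deriv γ s).2 ^ 2 = 1)
    (hκ : DifferentiableAt ℝ (curvA γ) s) (hκ' : DifferentiableAt ℝ (deriv (curvA γ)) s)
    (htrans : -(deriv (deriv (curvA γ)) s) = innerP V (nuA γ s)) :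
    HasDerivAt (fun t => innerP V (deriv γ t) + curvA γ t * deriv (curvA γ) t)
      (deriv (curvA γ) s ^ 2) s := by
  refine ((hasDerivAt_innerP (hasDerivAt_const s V) (hasDerivAt_tangent hγ' hunit)).add
    (hκ.hasDerivAt.mul hκ'.hasDerivAt)).congr_deriv ?_
  simp only [innerP, Prod.fst_zero, Prod.snd_zero, Prod.smul_fst, Prod.smul_snd,
    smul_eq_mul] at htrans ⊢
  linear_combination (-curvA γ s) * htrans

theorem integral_deriv_curvA_sq_mul_ballCutoff_le (hγ : ContDiff ℝ 4 γ)
    (hunit : ∀ s, (deriv γ s).1 ^ 2 + (deriv γ s).2 ^ 2 = 1) (hproper : IsProperMap γ)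
    (htrans : ∀ s, -(deriv (deriv (curvA γ)) s) = innerP V (nuA γ s)) {R : ℝ} (hR : 0 < R) :
    ∫ s, deriv (curvA γ) s ^ 2 * ballCutoff R (γ s) ≤
      16 * (1 / R ^ 2 * (∫ s in γ ⁻¹' euclBall R, curvA γ s ^ 2)
        + 1 / R * ∫ s in γ ⁻¹' euclBall R, |innerP V (deriv γ s)|) := by
  have hγ' : ContDiff ℝ 3 (deriv γ) := ContDiff.iterate_deriv' 3 1 hγ
  have hκ : ContDiff ℝ 2 (curvA γ) := contDiff_curvA hγ
  have hκ' : ContDiff ℝ 1 (deriv (curvA γ)) := ContDiff.iterate_deriv' 1 1 hκ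
  have henergy := integral_sq_mul_cutoff_le (L := 4 / R)
    (continuous_innerP_comp continuous_const hγ'.continuous) hκ.continuous hκ'.continuous
    (fun s => hasDerivAt_translator_flux (hγ'.differentiable (by simp) s) hunit
      (hκ.differentiable (by simp) s) (hκ'.differentiable (by simp) s) (htrans s))
    (fun s => hasDerivAt_ballCutoff_comp R (hasDerivAt_of_unitSpeed (hunit s)))
    ((continuous_ballCutoffDeriv R).comp (hγ.continuous.prodMk hγ'.continuous))
    (fun s => ballCutoff_nonneg R (γ s)) (fun s => ballCutoff_le_one R (γ s))
    (hproper.isCompact_preimage (isCompact_euclBall R)) (fun _ hs => ballCutoff_eq_zero hR hs)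
    (by positivity)
    (fun s => by
      simpa only [innerP, ← sq, hunit, mul_one] using ballCutoffDeriv_sq_le hR (γ s) (deriv γ s))
  calc ∫ s, deriv (curvA γ) s ^ 2 * ballCutoff R (γ s)
      ≤ (4 / R) ^ 2 * (∫ s in γ ⁻¹' euclBall R, curvA γ s ^ 2)
        + 2 * (4 / R) * ∫ s in γ ⁻¹' euclBall R, |innerP V (deriv γ s)| := henergy
    _ ≤ (4 / R) ^ 2 * (∫ s in γ ⁻¹' euclBall R, curvA γ s ^ 2)
        + 4 * (4 / R) * ∫ s in γ ⁻¹' euclBall R, |innerP V (deriv γ s)| := by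
      gcongr
      norm_num
    _ = 16 * (1 / R ^ 2 * (∫ s in γ ⁻¹' euclBall R, curvA γ s ^ 2)
        + 1 / R * ∫ s in γ ⁻¹' euclBall R, |innerP V (deriv γ s)|) := by ring

theorem deriv_curvA_eq_zero_of_growth (hγ : ContDiff ℝ 4 γ)
    (hunit : ∀ s, (deriv γ s).1 ^ 2 + (deriv γ s).2 ^ 2 = 1) (hproper : IsProperMap γ)
    (htrans : ∀ s, -(deriv (deriv (curvA γ)) s) = innerP V (nuA γ s))
    (hgrowth : ∀ ε > 0, ∃ᶠ ρ : ℝ in atTop,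
      (1 / ρ ^ 2) * (∫ s in γ ⁻¹' euclBall ρ, curvA γ s ^ 2)
        + (1 / ρ) * (∫ s in γ ⁻¹' euclBall ρ, |innerP V (deriv γ s)|) < ε) (s : ℝ) :
    deriv (curvA γ) s = 0 := by
  have hκ : ContDiff ℝ 2 (curvA γ) := contDiff_curvA hγ
  have hκ' : Continuous (deriv (curvA γ)) := (ContDiff.iterate_deriv' 1 1 hκ).continuous
  set energy : ℝ → ℝ → ℝ := fun R t => deriv (curvA γ) t ^ 2 * ballCutoff R (γ t)
  have hcont : ∀ R, Continuous (energy R) := fun R =>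
    (hκ'.pow 2).mul ((continuous_ballCutoff R).comp hγ.continuous)
  have hsupp : ∀ R, 0 < R → HasCompactSupport (energy R) := fun R hR =>
    .intro (hproper.isCompact_preimage (isCompact_euclBall R)) fun t ht => by
      simp only [energy, ballCutoff_eq_zero hR ht, mul_zero]
  obtain ⟨r, hr, hsr⟩ : ∃ r : ℝ, 0 < r ∧ innerP (γ s) (γ s) < r ^ 2 :=
    ((eventually_gt_atTop 0).and
      ((tendsto_pow_atTop two_ne_zero).eventually_gt_atTop _)).exists
  have hle : ∫ t, energy r t ≤ 0 := le_of_forall_pos_lt_add fun ε hε => by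
    obtain ⟨R, hRε, hrR⟩ :=
      ((hgrowth (ε / 16) (by positivity)).and_eventually (eventually_ge_atTop r)).exists
    have hR := hr.trans_le hrR
    calc ∫ t, energy r t ≤ ∫ t, energy R t :=
          integral_mono ((hcont r).integrable_of_hasCompactSupport (hsupp r hr))
            ((hcont R).integrable_of_hasCompactSupport (hsupp R hR)) fun t =>
              mul_le_mul_of_nonneg_left (ballCutoff_mono hr hrR (γ t)) (sq_nonneg _)
      _ ≤ _ := integral_deriv_curvA_sq_mul_ballCutoff_le hγ hunit hproper htrans hR
      _ < 0 + ε := by linarith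
  by_contra hne
  exact hle.not_gt <| (hcont r).integral_pos_of_hasCompactSupport_nonneg_nonzero (hsupp r hr)
    (fun t => mul_nonneg (sq_nonneg _) (ballCutoff_nonneg r (γ t)))
    (mul_ne_zero (pow_ne_zero 2 hne) (ballCutoff_pos hr hsr).ne')

end Translator

theorem proper_translator_with_growth_is_line_general
    (γ : ℝ → ℝ × ℝ) (hγ : ContDiff ℝ 4 γ)
    (hunit : ∀ s, (deriv γ s).1 ^ 2 + (deriv γ s).2 ^ 2 = 1) (hproper : IsProperMap γ)
    (V : ℝ × ℝ) (htrans : ∀ s, -(deriv (deriv (curvA γ)) s) = innerP V (nuA γ s))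
    (hgrowth : ∀ ε > 0, ∃ᶠ ρ : ℝ in atTop,
      (1 / ρ ^ 2) * (∫ s in γ ⁻¹' euclBall ρ, curvA γ s ^ 2)
        + (1 / ρ) * (∫ s in γ ⁻¹' euclBall ρ, |innerP V (deriv γ s)|) < ε) (s : ℝ) :
    γ s = γ 0 + s • deriv γ 0 := by
  have hγ' : Differentiable ℝ (deriv γ) :=
    (ContDiff.iterate_deriv' 3 1 hγ).differentiable (by simp)
  have hκ : Differentiable ℝ (curvA γ) := (contDiff_curvA (n := 2) hγ).differentiable (by simp)
  have hconst : ∀ t, curvA γ t = curvA γ 0 := fun t => is_const_of_deriv_eq_zero hκ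
    (deriv_curvA_eq_zero_of_growth hγ hunit hproper htrans hgrowth) t 0
  have hzero : curvA γ 0 = 0 := of_not_not fun hne =>
    not_isBounded_range_of_isProperMap hproper
      (isBounded_range_of_curvA_eq_const hγ' hunit hconst hne)
  exact eq_line_of_curvA_eq_zero hγ' hunit (fun t => (hconst t).trans hzero) s

/-- a proper open translator for the curve diffusion flow satisfying the
integral growth condition is a straight line. -/
theorem proper_translator_with_growth_is_line
    (γ : ℝ → ℝ × ℝ)
    (hsmooth : ContDiff ℝ (⊤ : ℕ∞) γ)
    (hunit : ∀ s, (deriv γ s).1 ^ 2 + (deriv γ s).2 ^ 2 = 1)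
    (hproper : ∀ C : Set (ℝ × ℝ), IsCompact C → IsCompact (γ ⁻¹' C))
    (V : ℝ × ℝ)
    (htrans : ∀ s, -(deriv (deriv (curvA γ)) s) = innerP V (nuA γ s))
    (hgrowth : Filter.Tendsto (fun ρ : ℝ =>
        (1 / ρ ^ 2) * (∫ s in γ ⁻¹' (euclBall ρ), (curvA γ s) ^ 2)
          + (1 / ρ) * (∫ s in γ ⁻¹' (euclBall (2 * ρ)), |innerP V (deriv γ s)|))
      Filter.atTop (nhds 0)) :
    ∀ s, γ s = γ 0 + s • deriv γ 0 := by
  have hγ := isProperMap_iff_isCompact_preimage.2 ⟨hsmooth.continuous, fun K => hproper K⟩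
  exact proper_translator_with_growth_is_line_general γ (contDiff_infty.1 hsmooth 4) hunit hγ V
    htrans fun ε hε => (eventually_growth_lt_of_tendsto_doubled hγ (continuous_innerP_comp
      continuous_const (hsmooth.continuous_deriv (by simp))).abs (fun _ => abs_nonneg _)
      hgrowth hε).frequently
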